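/- The Bunkbed Conjecture fails for the conditioned model: for G_1 with T=\{2,5,8\} and p=1/2, the conditioned bunkbed percolation \mathcal{E}_T satisfies \mathbb{P}(1^- \to 9^-) < \mathbb{P}(1^- \to 9^+). -/

import Mathlib

/-- Edges of the bunkbed graph of a directed graph on vertex type `V`:
`horiz u v ε` is the copy of the directed edge `(u,v)` in bunk `ε`
(`false` = lower bunk `-`, `true` = upper bunk `+`); `vert w` is the
bidirected vertical edge `(w⁻, w⁺)`. -/
inductive BBEdge (V : Type) : Type
  | horiz : V → V → Bool → BBEdge V
  | vert  : V → BBEdge V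
deriving DecidableEq

/-- The `F`-mirroring map on single edges: vertical edges are fixed, a horizontal
edge whose shadow lies in `F` is sent to its mirrored copy in the other bunk, and
horizontal edges with shadow outside `F` are fixed. -/
def mir {V : Type} [DecidableEq V] (F : Finset (V × V)) : BBEdge V → BBEdge V
  | .horiz u v ε => if (u, v) ∈ F then .horiz u v (!ε) else .horiz u v ε
  | .vert w => .vert w

/-- The `F`-mirrored subgraph `M(H,F)`. -/
def M {V : Type} [DecidableEq V] (H : Finset (BBEdge V)) (F : Finset (V × V)) :
    Finset (BBEdge V) :=
  H.image (mir F)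
/-- The edge set of the bunkbed graph of the directed graph with vertex set `Vs`
and edge set `E`: the vertical edges at all vertices together with the two
horizontal copies of each edge. -/
def bbEdges {V : Type} [DecidableEq V] (Vs : Finset V) (E : Finset (V × V)) :
    Finset (BBEdge V) :=
  Vs.image BBEdge.vert ∪ E.image (fun p => BBEdge.horiz p.1 p.2 false) ∪
    E.image (fun p => BBEdge.horiz p.1 p.2 true)
/-- Probability of the event `A` under uniform (`p = 1/2`) Bernoulli bond
percolation on the edge set `s`: a subgraph is a uniformly random subset of `s`. -/
noncomputable def Pr {V : Type} [DecidableEq V] (s : Finset (BBEdge V))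
    (A : Finset (BBEdge V) → Prop) : ℚ :=
  letI := Classical.decPred A
  ((s.powerset.filter A).card : ℚ) / (s.powerset.card : ℚ)

/-- Conditional probability of `A` given `C` under uniform percolation on `s`. -/
noncomputable def CondPr {V : Type} [DecidableEq V] (s : Finset (BBEdge V))
    (C A : Finset (BBEdge V) → Prop) : ℚ :=
  Pr s (fun H => A H ∧ C H) / Pr s C

/-- One step of directed traversal in a subgraph `H` of the bunkbed graph:
horizontal edges are used in their direction within a bunk, and vertical edges
may be traversed in both directions. Vertices of the bunkbed graph are pairs
`(w, ε)` with `ε : Bool` the bunk label (`false` = `-`, `true` = `+`). -/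
def bbStep {V : Type} [DecidableEq V] (H : Finset (BBEdge V)) :
    V × Bool → V × Bool → Prop := fun a b =>
  (a.1 = b.1 ∧ a.2 ≠ b.2 ∧ BBEdge.vert a.1 ∈ H) ∨
    (a.2 = b.2 ∧ BBEdge.horiz a.1 b.1 a.2 ∈ H)

/-- Directed reachability `x → y` in a subgraph of the bunkbed graph. -/
def bbReach {V : Type} [DecidableEq V] (H : Finset (BBEdge V))
    (a b : V × Bool) : Prop :=
  Relation.ReflTransGen (bbStep H) a b
/-- The conditioning event of the conditioned bunkbed model `𝓔_T`: all vertices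
of `T` are posts. -/
def postCond {V : Type} [DecidableEq V] (T : Finset V)
    (H : Finset (BBEdge V)) : Prop :=
  ∀ t ∈ T, BBEdge.vert t ∈ H

/-- The edge set of the graph `G₁` of Przybyłowski's counterexample, on
vertices `1,…,9`. -/
def E1 : Finset (ℕ × ℕ) :=
  {(1,2), (1,4), (2,3), (3,4), (4,5), (3,7), (5,6), (6,7), (6,9), (7,8), (8,9)}

/-- The vertex set of `G₁`. -/
def V1 : Finset ℕ := {1, 2, 3, 4, 5, 6, 7, 8, 9}

/-- The conditioning set `T = {2,5,8}`. -/
def T1 : Finset ℕ := {2, 5, 8}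

/-- The edge set of the bunkbed graph of `G₁`. -/
def s1 : Finset (BBEdge ℕ) := bbEdges V1 E1

/-- The event `F` that the post set is exactly `{2,5,8}`. -/
def exactPosts (H : Finset (BBEdge ℕ)) : Prop :=
  ∀ w : ℕ, BBEdge.vert w ∈ H ↔ w ∈ T1

/-!
Write `σ(H) = [1⁻ → 9⁻] - [1⁻ → 9⁺]`; the claim is that `σ` has negative sum over the subgraphs in
which `2, 5, 8` are posts. If there is a further post, then the posts separate `1` from `9`, and
mirroring the side of `9` exchanges the two events, so these subgraphs contribute `0`.

If the posts are exactly `2, 5, 8`, then `G₁` consists of the half on `1, …, 5`, its image under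
`i ↦ 10 - i` (with arrows reversed), and the edge `(3, 7)` joining the two halves, which also share
the post `5`. Let `y` indicate that `1⁻` reaches `5` in a half, and `x⁻`, `x⁺` that it reaches
`3⁻`, `3⁺`. Summing over the copies of `(3, 7)`, and mirroring the second half to compare `9⁺` with
`9⁻`, turns the sum of `σ` into `2 ∑ (1 - y y') (x⁻ - x⁺) (x'⁻ - x'⁺)` over two independent halves.
By mirroring, `∑ (x⁻ - x⁺) = 0`, so this equals `-2 (∑ y (x⁻ - x⁺))²`, which is negative because
the inner sum does not vanish.
-/

theorem sum_powerset_union {α β : Type*} [DecidableEq α] [AddCommMonoid β] {s t : Finset α}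
    (h : Disjoint s t) (f : Finset α → β) :
    ∑ u ∈ (s ∪ t).powerset, f u = ∑ a ∈ s.powerset, ∑ b ∈ t.powerset, f (a ∪ b) := by
  have hinj : Set.InjOn (fun p : Finset α × Finset α => p.1 ∪ p.2)
      (s.powerset ×ˢ t.powerset : Finset (Finset α × Finset α)) := by
    rintro ⟨a, b⟩ hab ⟨a', b'⟩ hab' heq
    simp only [Finset.coe_product, Finset.coe_powerset, Set.mem_prod, Set.mem_preimage,
      Set.mem_powerset_iff, Finset.coe_subset] at hab hab'
    rw [Finset.disjoint_left] at h
    simp only [Finset.ext_iff, Finset.mem_union, Finset.subset_iff, Prod.mk.injEq] at *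
    grind
  rw [Finset.powerset_union, ← Finset.sum_product', ← Finset.image_sup_product]
  exact Finset.sum_image hinj

theorem sum_powerset_pair {α β : Type*} [DecidableEq α] [AddCommMonoid β] {a b : α} (h : a ≠ b)
    (f : Finset α → β) :
    ∑ u ∈ ({a, b} : Finset α).powerset, f u = f ∅ + f {b} + (f {a} + f {a, b}) := by
  have hsingle : ({b} : Finset α).powerset = {∅, {b}} := by
    ext u
    simp [Finset.subset_singleton_iff]
  rw [Finset.sum_powerset_insert (by simpa using h), hsingle,
    Finset.sum_pair (Finset.singleton_ne_empty b).symm,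
    Finset.sum_pair (Finset.singleton_ne_empty b).symm, insert_empty_eq]

section Bunkbed

variable {V : Type} [DecidableEq V]

/-- The two horizontal copies of each edge in `E`. -/
def horizEdges (E : Finset (V × V)) : Finset (BBEdge V) :=
  (E ×ˢ Finset.univ).image fun p => .horiz p.1.1 p.1.2 p.2

/-- The vertical edges at the vertices in `P`, i.e. the subgraph formed by the set of posts `P`. -/
def vertEdges (P : Finset V) : Finset (BBEdge V) :=
  P.image .vert

@[simp]
theorem horiz_mem_horizEdges {E : Finset (V × V)} {u v : V} {ε : Bool} :
    BBEdge.horiz u v ε ∈ horizEdges E ↔ (u, v) ∈ E := by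
  simp [horizEdges]

@[simp]
theorem vert_notMem_horizEdges {E : Finset (V × V)} {w : V} : BBEdge.vert w ∉ horizEdges E := by
  simp [horizEdges]

@[simp]
theorem horiz_notMem_vertEdges {P : Finset V} {u v : V} {ε : Bool} :
    BBEdge.horiz u v ε ∉ vertEdges P := by
  simp [vertEdges]

@[simp]
theorem vert_mem_vertEdges {P : Finset V} {w : V} : BBEdge.vert w ∈ vertEdges P ↔ w ∈ P := by
  simp [vertEdges]

theorem bbEdges_eq_union (Vs : Finset V) (E : Finset (V × V)) :
    bbEdges Vs E = vertEdges Vs ∪ horizEdges E := by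
  ext (⟨u, v, _ | _⟩ | w) <;> simp [bbEdges]

theorem sum_powerset_bbEdges {β : Type*} [AddCommMonoid β] (Vs : Finset V) (E : Finset (V × V))
    (f : Finset (BBEdge V) → β) :
    ∑ H ∈ (bbEdges Vs E).powerset, f H =
      ∑ P ∈ Vs.powerset, ∑ K ∈ (horizEdges E).powerset, f (vertEdges P ∪ K) := by
  have hdisj : Disjoint (vertEdges Vs) (horizEdges E) := by
    rw [Finset.disjoint_left]
    rintro (_ | _) <;> simp
  have hinj : Function.Injective (vertEdges (V := V)) :=
    Finset.image_injective fun _ _ h => BBEdge.vert.inj h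
  rw [bbEdges_eq_union, sum_powerset_union hdisj, vertEdges, Finset.powerset_image]
  exact Finset.sum_image hinj.injOn

theorem postCond_vertEdges_union {T P : Finset V} {E : Finset (V × V)} {K : Finset (BBEdge V)}
    (hK : K ⊆ horizEdges E) : postCond T (vertEdges P ∪ K) ↔ T ⊆ P := by
  have hvert (w : V) : BBEdge.vert w ∉ K := fun h => vert_notMem_horizEdges (hK h)
  simp [postCond, hvert, Finset.subset_iff]

/-! ### Mirroring -/

theorem mir_involutive (F : Finset (V × V)) : Function.Involutive (mir F) := by
  rintro (⟨u, v, ε⟩ | w)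
  · by_cases h : (u, v) ∈ F <;> simp [mir, h]
  · rfl

theorem M_involutive (F : Finset (V × V)) : Function.Involutive (M · F) := fun H => by
  simp [M, Finset.image_image, (mir_involutive F).comp_self]

theorem mem_M {H : Finset (BBEdge V)} {F : Finset (V × V)} {e : BBEdge V} :
    e ∈ M H F ↔ mir F e ∈ H := by
  have hM : (M H F).image (mir F) = H := M_involutive F H
  rw [← (mir_involutive F).injective.mem_finset_image, hM]

@[simp]
theorem vert_mem_M {H : Finset (BBEdge V)} {F : Finset (V × V)} {w : V} :
    BBEdge.vert w ∈ M H F ↔ BBEdge.vert w ∈ H :=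
  mem_M

theorem horiz_mem_M {H : Finset (BBEdge V)} {F : Finset (V × V)} {u v : V} {ε : Bool} :
    BBEdge.horiz u v ε ∈ M H F ↔
      BBEdge.horiz u v (if (u, v) ∈ F then !ε else ε) ∈ H := by
  rw [mem_M, mir, apply_ite (BBEdge.horiz u v)]

theorem M_subset_horizEdges {E F : Finset (V × V)} {K : Finset (BBEdge V)}
    (hK : K ⊆ horizEdges E) : M K F ⊆ horizEdges E := by
  rintro (⟨u, v, ε⟩ | w) he
  · simpa using hK (horiz_mem_M.1 he)
  · exact hK (vert_mem_M.1 he)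

theorem sum_powerset_horizEdges_comp_M {β : Type*} [AddCommMonoid β] (E F : Finset (V × V))
    (f : Finset (BBEdge V) → β) :
    ∑ K ∈ (horizEdges E).powerset, f (M K F) = ∑ K ∈ (horizEdges E).powerset, f K := by
  have hmaps : ∀ K ∈ (horizEdges E).powerset, M K F ∈ (horizEdges E).powerset := fun K hK =>
    Finset.mem_powerset.2 (M_subset_horizEdges (Finset.mem_powerset.1 hK))
  exact Finset.sum_nbij' (M · F) (M · F) hmaps hmaps (fun K _ => M_involutive F K)
    (fun K _ => M_involutive F K) fun _ _ => rfl

theorem sum_eq_zero_of_M_eq_neg {β : Type*} [AddCommGroup β] [IsAddTorsionFree β]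
    {E F : Finset (V × V)} {f : Finset (BBEdge V) → β}
    (h : ∀ K ⊆ horizEdges E, f (M K F) = -f K) : ∑ K ∈ (horizEdges E).powerset, f K = 0 := by
  refine self_eq_neg.1 ?_
  calc ∑ K ∈ (horizEdges E).powerset, f K
    _ = ∑ K ∈ (horizEdges E).powerset, f (M K F) := (sum_powerset_horizEdges_comp_M E F f).symm
    _ = -∑ K ∈ (horizEdges E).powerset, f K := by
      rw [← Finset.sum_neg_distrib]
      exact Finset.sum_congr rfl fun K hK => h K (Finset.mem_powerset.1 hK)

/-- Every edge of `E` between `S` and its complement has its endpoint outside `S` in `P`: the posts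
`P` separate `S` from the rest of the graph. -/
def HasPostBoundary (E : Finset (V × V)) (P S : Finset V) : Prop :=
  ∀ p ∈ E, (p.1 ∈ S → p.2 ∈ S ∪ P) ∧ (p.2 ∈ S → p.1 ∈ S ∪ P)

theorem HasPostBoundary.mono {E : Finset (V × V)} {P Q S : Finset V}
    (h : HasPostBoundary E P S) (hPQ : P ⊆ Q) : HasPostBoundary E Q S := fun p hp =>
  have hS : S ∪ P ⊆ S ∪ Q := Finset.union_subset_union_right hPQ
  ⟨fun h_fst => hS ((h p hp).1 h_fst), fun h_snd => hS ((h p hp).2 h_snd)⟩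

/-- The edges of `E` with an endpoint in `S`, along which we mirror to exchange the two copies
of `S`. -/
def touching (E : Finset (V × V)) (S : Finset V) : Finset (V × V) :=
  E.filter fun p => p.1 ∈ S ∨ p.2 ∈ S

/-- The action on vertices of the bunkbed graph that exchanges the two copies of `S`. -/
def mirrorVertex (S : Finset V) (x : V × Bool) : V × Bool :=
  (x.1, if x.1 ∈ S then !x.2 else x.2)

theorem mirrorVertex_involutive (S : Finset V) : Function.Involutive (mirrorVertex S) := by
  rintro ⟨w, ε⟩
  by_cases h : w ∈ S <;> simp [mirrorVertex, h]

theorem bbReach_of_vert_mem {H : Finset (BBEdge V)} {w : V} (hw : .vert w ∈ H) (ε δ : Bool) :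
    bbReach H (w, ε) (w, δ) := by
  by_cases h : ε = δ
  · exact h ▸ .refl
  · exact .single (.inl ⟨rfl, h, hw⟩)

theorem bbReach_of_horiz_mem {H : Finset (BBEdge V)} {u v : V} {ε : Bool}
    (huv : .horiz u v ε ∈ H) : bbReach H (u, ε) (v, ε) :=
  .single (.inr ⟨rfl, huv⟩)

theorem bbReach.mirror {E : Finset (V × V)} {P S : Finset V} {K : Finset (BBEdge V)}
    (hK : K ⊆ horizEdges E) (hS : HasPostBoundary E P S) {a b : V × Bool}
    (h : bbReach (vertEdges P ∪ K) a b) :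
    bbReach (vertEdges P ∪ M K (touching E S)) (mirrorVertex S a) (mirrorVertex S b) := by
  set H' := vertEdges P ∪ M K (touching E S)
  have hpost {w : V} (hw : w ∈ P) (ε δ : Bool) : bbReach H' (w, ε) (w, δ) :=
    bbReach_of_vert_mem (by simp [H', hw]) ε δ
  refine Relation.ReflTransGen.lift' (mirrorVertex S) ?_ _ _ h
  rintro ⟨u, ε⟩ ⟨v, δ⟩ (⟨huv, -, hvert⟩ | ⟨hεδ, hhoriz⟩)
  · obtain rfl : u = v := huv
    have hnot : BBEdge.vert u ∉ K := fun he => vert_notMem_horizEdges (hK he)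
    exact hpost (by simpa [hnot] using hvert) _ _
  · obtain rfl : ε = δ := hεδ
    have hmem : BBEdge.horiz u v ε ∈ K := by simpa using hhoriz
    have huv : (u, v) ∈ E := horiz_mem_horizEdges.1 (hK hmem)
    have hstep : bbReach H' (u, if u ∈ S ∨ v ∈ S then !ε else ε)
        (v, if u ∈ S ∨ v ∈ S then !ε else ε) := by
      refine bbReach_of_horiz_mem (Finset.mem_union_right _ (horiz_mem_M.2 ?_))
      by_cases hS : u ∈ S ∨ v ∈ S <;> simp [touching, huv, hS, hmem]
    have hout (hu : u ∈ S) (hv : v ∉ S) : v ∈ P := by simpa [hv] using (hS _ huv).1 hu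
    have hin (hv : v ∈ S) (hu : u ∉ S) : u ∈ P := by simpa [hu] using (hS _ huv).2 hv
    by_cases hu : u ∈ S <;> by_cases hv : v ∈ S <;>
      simp only [hu, hv, true_or, or_true, or_self, if_true, if_false] at hstep <;>
      simp only [Function.onFun, mirrorVertex, hu, hv, if_true, if_false]
    · exact hstep
    · exact hstep.trans (hpost (hout hu hv) _ _)
    · exact (hpost (hin hv hu) _ _).trans hstep
    · exact hstep

theorem bbReach_union_M_iff {E : Finset (V × V)} {P S : Finset V} {K : Finset (BBEdge V)}
    (hK : K ⊆ horizEdges E) (hS : HasPostBoundary E P S) {a b : V × Bool} :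
    bbReach (vertEdges P ∪ M K (touching E S)) a b ↔
      bbReach (vertEdges P ∪ K) (mirrorVertex S a) (mirrorVertex S b) := by
  constructor <;> intro h
  · simpa [M_involutive _ K] using h.mirror (M_subset_horizEdges hK) hS
  · simpa [mirrorVertex_involutive S _] using h.mirror hK hS

theorem bbReach_union_M_iff_not {E : Finset (V × V)} {P S : Finset V} {K : Finset (BBEdge V)}
    (hK : K ⊆ horizEdges E) (hS : HasPostBoundary E P S) {a b : V} (ha : a ∉ S)
    (hb : b ∈ S ∪ P) (α ε : Bool) :
    bbReach (vertEdges P ∪ M K (touching E S)) (a, α) (b, ε) ↔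
      bbReach (vertEdges P ∪ K) (a, α) (b, !ε) := by
  have ha' : mirrorVertex S (a, α) = (a, α) := by simp [mirrorVertex, ha]
  rw [bbReach_union_M_iff hK hS, ha', mirrorVertex]
  by_cases hbS : b ∈ S
  · simp [hbS]
  · have hbP : BBEdge.vert b ∈ vertEdges P ∪ K := by
      rw [Finset.mem_union, vert_mem_vertEdges]
      exact .inl ((Finset.mem_union.1 hb).resolve_left hbS)
    simp only [hbS, if_false]
    exact ⟨fun h => h.trans (bbReach_of_vert_mem hbP _ _),
      fun h => h.trans (bbReach_of_vert_mem hbP _ _)⟩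

/-- The Iverson bracket of a proposition, with values in `ℤ` so that brackets can be subtracted. -/
def iverson (p : Prop) [Decidable p] : ℤ :=
  if p then 1 else 0

theorem iverson_congr {p q : Prop} [Decidable p] [Decidable q] (h : p ↔ q) :
    iverson p = iverson q := by
  simp [iverson, h]

theorem iverson_and {p q : Prop} [Decidable p] [Decidable q] :
    iverson (p ∧ q) = iverson p * iverson q := by
  by_cases hp : p <;> simp [iverson, hp]

theorem sum_iverson_or_exists_horiz_mem (u v : V) (p : Prop) [Decidable p] (q : Bool → Prop)
    [DecidablePred q] :
    ∑ B ∈ (horizEdges {(u, v)}).powerset, iverson (p ∨ ∃ ε, q ε ∧ .horiz u v ε ∈ B) =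
      4 - (1 - iverson p) * ((2 - iverson (q false)) * (2 - iverson (q true))) := by
  have hcopies : horizEdges {(u, v)} = {.horiz u v false, .horiz u v true} := by
    ext (⟨x, y, _ | _⟩ | w) <;> simp
  rw [hcopies, sum_powerset_pair (by simp)]
  by_cases hp : p <;> by_cases hf : q false <;> by_cases ht : q true <;>
    simp [iverson, hp, hf, ht]

open Classical in
/-- The difference `[a⁻ → b⁻] - [a⁻ → b⁺]` in the subgraph `H`; its sum over the subgraphs is the
difference of the two probabilities compared by the Bunkbed Conjecture, up to normalization. -/
noncomputable def bunkSurplus (H : Finset (BBEdge V)) (a b : V) : ℤ :=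
  iverson (bbReach H (a, false) (b, false)) - iverson (bbReach H (a, false) (b, true))

theorem sum_bunkSurplus_eq_zero_of_hasPostBoundary {E : Finset (V × V)} {P S : Finset V} {a b : V}
    (hS : HasPostBoundary E P S) (ha : a ∉ S) (hb : b ∈ S ∪ P) :
    ∑ K ∈ (horizEdges E).powerset, bunkSurplus (vertEdges P ∪ K) a b = 0 := by
  classical
  refine sum_eq_zero_of_M_eq_neg (F := touching E S) fun K hK => ?_
  rw [bunkSurplus, bunkSurplus, neg_sub]
  congr 1 <;> exact iverson_congr (bbReach_union_M_iff_not hK hS ha hb _ _)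

/-! ### Comparing conditional probabilities -/

theorem Pr_eq (s : Finset (BBEdge V)) (A : Finset (BBEdge V) → Prop) [DecidablePred A] :
    Pr s A = (s.powerset.filter A).card / s.powerset.card := by
  unfold Pr
  congr!

theorem condPr_lt_condPr_of_sum_neg {s : Finset (BBEdge V)} {C A B : Finset (BBEdge V) → Prop}
    [DecidablePred A] [DecidablePred B] [DecidablePred C]
    (h : ∑ H ∈ s.powerset with C H, (iverson (A H) - iverson (B H)) < 0) :
    CondPr s C A < CondPr s C B := by
  have hcard : (s.powerset.filter fun H => A H ∧ C H).card <
      (s.powerset.filter fun H => B H ∧ C H).card := by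
    simpa [iverson, Finset.filter_filter, and_comm] using h
  have hC : 0 < (s.powerset.filter C).card := by
    refine Finset.card_pos.2 (Finset.nonempty_iff_ne_empty.2 fun h_empty => ?_)
    simp [h_empty] at h
  have hs : (0 : ℚ) < s.powerset.card := by simp
  simp only [CondPr, Pr_eq]
  refine div_lt_div_of_pos_right (div_lt_div_of_pos_right ?_ hs) (div_pos ?_ hs)
  · exact_mod_cast hcard
  · exact_mod_cast hC

/-! ### Reachability in terms of incoming edges -/

theorem bbReach_iff_of_vert_notMem {H : Finset (BBEdge V)} {a : V × Bool} {w : V} {ε : Bool}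
    (hw : .vert w ∉ H) :
    bbReach H a (w, ε) ↔ a = (w, ε) ∨ ∃ u, .horiz u w ε ∈ H ∧ bbReach H a (u, ε) := by
  rw [bbReach, Relation.ReflTransGen.cases_tail_iff, eq_comm]
  refine or_congr_right ⟨?_, fun ⟨u, hu, hr⟩ => ⟨(u, ε), hr, .inr ⟨rfl, hu⟩⟩⟩
  rintro ⟨⟨u, δ⟩, hr, ⟨huw, -, hv⟩ | ⟨hδ, hu⟩⟩
  · obtain rfl : u = w := huw
    exact absurd hv hw
  · obtain rfl : δ = ε := hδ
    exact ⟨u, hu, hr⟩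

theorem bbReach_iff_of_vert_mem {H : Finset (BBEdge V)} {a : V × Bool} {w : V} {ε : Bool}
    (hw : .vert w ∈ H) :
    bbReach H a (w, ε) ↔ ∃ δ, a = (w, δ) ∨ ∃ u, .horiz u w δ ∈ H ∧ bbReach H a (u, δ) := by
  constructor
  · generalize hb : (w, ε) = b
    intro h
    induction h generalizing ε with
    | refl => exact ⟨ε, .inl hb.symm⟩
    | @tail c _ hac hcb ih =>
      obtain rfl := hb
      obtain ⟨u, δ⟩ := c
      rcases hcb with ⟨huw, -, -⟩ | ⟨hδ, hu⟩
      · exact ih (congrArg (·, δ) huw.symm)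
      · obtain rfl : δ = ε := hδ
        exact ⟨δ, .inr ⟨u, hu, hac⟩⟩
  · rintro ⟨δ, rfl | ⟨u, hu, hr⟩⟩
    · exact bbReach_of_vert_mem hw δ ε
    · exact (hr.trans (bbReach_of_horiz_mem hu)).trans (bbReach_of_vert_mem hw δ ε)

end Bunkbed

/-! ### The graph `G₁` -/

/-- The edges of `G₁` among `1, …, 5`. -/
def leftHalf : Finset (ℕ × ℕ) :=
  {(1, 2), (1, 4), (2, 3), (3, 4), (4, 5)}

/-- In the half with edges `leftHalf`, with posts at `2` and `5`, the vertex `1` of bunk `β` reaches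
the vertex `3` of bunk `ε`. -/
def HalfReachesThree (L : Finset (BBEdge ℕ)) (β ε : Bool) : Prop :=
  .horiz 1 2 β ∈ L ∧ .horiz 2 3 ε ∈ L

/-- In the half with edges `leftHalf`, with posts at `2` and `5`, the vertex `1` of bunk `β` reaches
the post `5`. -/
def HalfReachesFive (L : Finset (BBEdge ℕ)) (β : Bool) : Prop :=
  (.horiz 1 4 β ∈ L ∧ .horiz 4 5 β ∈ L) ∨
    ∃ ε, HalfReachesThree L β ε ∧ .horiz 3 4 ε ∈ L ∧ .horiz 4 5 ε ∈ L

instance (L : Finset (BBEdge ℕ)) (β ε : Bool) : Decidable (HalfReachesThree L β ε) :=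
  inferInstanceAs (Decidable (_ ∧ _))

instance (L : Finset (BBEdge ℕ)) (β : Bool) : Decidable (HalfReachesFive L β) :=
  inferInstanceAs (Decidable (_ ∨ _))

/-- The action of the symmetry `i ↦ 10 - i`, with arrows reversed, on the edges of the bunkbed graph
of `G₁`. It exchanges the half with edges `leftHalf` and the half on `5, …, 9`. -/
def reverseEdge : BBEdge ℕ → BBEdge ℕ
  | .horiz u v ε => .horiz (10 - v) (10 - u) ε
  | .vert w => .vert (10 - w)

/-- The image of a subgraph under `reverseEdge`. -/
def reverse (K : Finset (BBEdge ℕ)) : Finset (BBEdge ℕ) :=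
  K.image reverseEdge

theorem reverse_reverse {K : Finset (BBEdge ℕ)} (hK : K ⊆ horizEdges E1) :
    reverse (reverse K) = K := by
  have hinv : ∀ e ∈ horizEdges E1, reverseEdge (reverseEdge e) = e := by decide
  calc reverse (reverse K)
    _ = K.image (reverseEdge ∘ reverseEdge) := Finset.image_image
    _ = K.image id := Finset.image_congr fun e he => hinv e (hK he)
    _ = K := Finset.image_id

theorem horiz_mem_reverse {K : Finset (BBEdge ℕ)} {u v : ℕ} {ε : Bool} (hu : 0 < u) (hv : 0 < v)
    (hu' : u ≤ 10) (hv' : v ≤ 10) :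
    .horiz u v ε ∈ reverse K ↔ .horiz (10 - v) (10 - u) ε ∈ K := by
  rw [reverse, Finset.mem_image]
  constructor
  · rintro ⟨⟨x, y, δ⟩ | w, he, h⟩
    · obtain ⟨hy, hx, rfl⟩ := BBEdge.horiz.inj h
      obtain rfl : x = 10 - v := by omega
      obtain rfl : y = 10 - u := by omega
      exact he
    · cases h
  · intro h
    exact ⟨_, h, by simp only [reverseEdge, Nat.sub_sub_self hu', Nat.sub_sub_self hv']⟩

section ExactPosts

variable {K : Finset (BBEdge ℕ)}

theorem horiz_mem_vertEdges_union_iff {P : Finset ℕ} {E : Finset (ℕ × ℕ)} (hK : K ⊆ horizEdges E)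
    {u v : ℕ} {ε : Bool} :
    .horiz u v ε ∈ vertEdges P ∪ K ↔ (u, v) ∈ E ∧ .horiz u v ε ∈ K := by
  simpa using fun h => horiz_mem_horizEdges.1 (hK h)

theorem bbReach_iff_of_notMem_T1 (hK : K ⊆ horizEdges E1) {w : ℕ} (hw : w ∉ T1) (ε : Bool) :
    bbReach (vertEdges T1 ∪ K) (1, false) (w, ε) ↔ (1 = w ∧ false = ε) ∨
      ∃ u, (u, w) ∈ E1 ∧ .horiz u w ε ∈ K ∧ bbReach (vertEdges T1 ∪ K) (1, false) (u, ε) := by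
  have hvert : BBEdge.vert w ∉ K := fun h => vert_notMem_horizEdges (hK h)
  rw [bbReach_iff_of_vert_notMem (by simp [hw, hvert])]
  simp only [Prod.mk.injEq, horiz_mem_vertEdges_union_iff hK, and_assoc]

theorem bbReach_iff_of_mem_T1 (hK : K ⊆ horizEdges E1) {w : ℕ} (hw : w ∈ T1) (ε : Bool) :
    bbReach (vertEdges T1 ∪ K) (1, false) (w, ε) ↔
      ∃ δ u, (u, w) ∈ E1 ∧ .horiz u w δ ∈ K ∧ bbReach (vertEdges T1 ∪ K) (1, false) (u, δ) := by
  have h_one : 1 ≠ w := fun h => absurd (h ▸ hw) (by decide)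
  rw [bbReach_iff_of_vert_mem (by simp [hw])]
  simp only [Prod.mk.injEq, h_one, false_and, false_or, horiz_mem_vertEdges_union_iff hK, and_assoc]

theorem bbReach_one_iff (hK : K ⊆ horizEdges E1) (ε : Bool) :
    bbReach (vertEdges T1 ∪ K) (1, false) (1, ε) ↔ ε = false := by
  rw [bbReach_iff_of_notMem_T1 hK (by decide)]
  simp [E1, eq_comm]

theorem bbReach_three_iff (hK : K ⊆ horizEdges E1) (ε : Bool) :
    bbReach (vertEdges T1 ∪ K) (1, false) (3, ε) ↔ HalfReachesThree K false ε := by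
  rw [bbReach_iff_of_notMem_T1 hK (by decide)]
  simp [E1, HalfReachesThree, bbReach_iff_of_mem_T1 hK (w := 2) (by decide), bbReach_one_iff hK,
    and_comm]

theorem bbReach_five_iff (hK : K ⊆ horizEdges E1) (ε : Bool) :
    bbReach (vertEdges T1 ∪ K) (1, false) (5, ε) ↔ HalfReachesFive K false := by
  rw [bbReach_iff_of_mem_T1 hK (by decide)]
  have hfour (δ : Bool) : bbReach (vertEdges T1 ∪ K) (1, false) (4, δ) ↔
      (.horiz 1 4 δ ∈ K ∧ δ = false) ∨ (.horiz 3 4 δ ∈ K ∧ HalfReachesThree K false δ) := by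
    rw [bbReach_iff_of_notMem_T1 hK (by decide)]
    simp [E1, bbReach_one_iff hK, bbReach_three_iff hK]
  simp only [E1, Finset.mem_insert, Prod.mk.injEq, Nat.reduceEqDiff, and_false, Nat.succ_ne_self,
    and_true, Finset.mem_singleton, or_self, or_false, false_or, exists_eq_left, hfour,
    Bool.exists_bool, Bool.true_eq_false, HalfReachesFive]
  tauto

theorem bbReach_six_iff (hK : K ⊆ horizEdges E1) (ε : Bool) :
    bbReach (vertEdges T1 ∪ K) (1, false) (6, ε) ↔ HalfReachesFive K false ∧ .horiz 5 6 ε ∈ K := by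
  rw [bbReach_iff_of_notMem_T1 hK (by decide)]
  simp [E1, bbReach_five_iff hK, and_comm]

theorem bbReach_eight_iff (hK : K ⊆ horizEdges E1) (ε : Bool) :
    bbReach (vertEdges T1 ∪ K) (1, false) (8, ε) ↔
      ∃ δ, .horiz 7 8 δ ∈ K ∧ ((HalfReachesThree K false δ ∧ .horiz 3 7 δ ∈ K) ∨
        (HalfReachesFive K false ∧ .horiz 5 6 δ ∈ K ∧ .horiz 6 7 δ ∈ K)) := by
  rw [bbReach_iff_of_mem_T1 hK (by decide)]
  simp [E1, bbReach_iff_of_notMem_T1 hK (w := 7) (by decide), bbReach_three_iff hK,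
    bbReach_six_iff hK, and_comm, and_assoc]

theorem bbReach_nine_iff (hK : K ⊆ horizEdges E1) (β : Bool) :
    bbReach (vertEdges T1 ∪ K) (1, false) (9, β) ↔
      (HalfReachesFive K false ∧ HalfReachesFive (reverse K) β) ∨
        ∃ ε, HalfReachesThree K false ε ∧ .horiz 3 7 ε ∈ K ∧ HalfReachesThree (reverse K) β ε := by
  have hfive : HalfReachesFive (reverse K) β ↔ (.horiz 6 9 β ∈ K ∧ .horiz 5 6 β ∈ K) ∨
      ∃ ε, (.horiz 8 9 β ∈ K ∧ .horiz 7 8 ε ∈ K) ∧ .horiz 6 7 ε ∈ K ∧ .horiz 5 6 ε ∈ K := by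
    simp [HalfReachesFive, HalfReachesThree, horiz_mem_reverse]
  have hthree (ε : Bool) : HalfReachesThree (reverse K) β ε ↔
      .horiz 8 9 β ∈ K ∧ .horiz 7 8 ε ∈ K := by
    simp [HalfReachesThree, horiz_mem_reverse]
  have hnine : bbReach (vertEdges T1 ∪ K) (1, false) (9, β) ↔
      (.horiz 6 9 β ∈ K ∧ HalfReachesFive K false ∧ .horiz 5 6 β ∈ K) ∨
        .horiz 8 9 β ∈ K ∧ bbReach (vertEdges T1 ∪ K) (1, false) (8, β) := by
    rw [bbReach_iff_of_notMem_T1 hK (by decide)]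
    simp [E1, bbReach_six_iff hK]
  rw [hnine, bbReach_eight_iff hK, hfive]
  simp only [hthree]
  grind

end ExactPosts

/-! ### Splitting `G₁` into its halves -/

theorem halfReachesThree_inter {K : Finset (BBEdge ℕ)} {β ε : Bool} :
    HalfReachesThree (K ∩ horizEdges leftHalf) β ε ↔ HalfReachesThree K β ε := by
  simp [HalfReachesThree, leftHalf]

theorem halfReachesFive_inter {K : Finset (BBEdge ℕ)} {β : Bool} :
    HalfReachesFive (K ∩ horizEdges leftHalf) β ↔ HalfReachesFive K β := by
  simp only [HalfReachesFive, halfReachesThree_inter]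
  simp [leftHalf]

theorem halfReachesThree_M_leftHalf {L : Finset (BBEdge ℕ)} {β ε : Bool} :
    HalfReachesThree (M L leftHalf) β ε ↔ HalfReachesThree L (!β) (!ε) := by
  simp [HalfReachesThree, horiz_mem_M, leftHalf]

theorem halfReachesFive_M_leftHalf {L : Finset (BBEdge ℕ)} {β : Bool} :
    HalfReachesFive (M L leftHalf) β ↔ HalfReachesFive L (!β) := by
  simp only [HalfReachesFive, halfReachesThree_M_leftHalf, horiz_mem_M, Bool.exists_bool]
  simp [leftHalf, or_comm]

theorem horizEdges_E1 :
    horizEdges E1 =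
      horizEdges leftHalf ∪ (reverse (horizEdges leftHalf) ∪ horizEdges {(3, 7)}) := by
  decide

/-- The subgraph of the bunkbed graph of `G₁` made up of the subgraphs `L` and `L'` of the two
copies of `leftHalf`, the second one reversed, and a set `B` of copies of the edge `(3, 7)`. -/
def glue (L L' B : Finset (BBEdge ℕ)) : Finset (BBEdge ℕ) :=
  L ∪ (reverse L' ∪ B)

theorem sum_powerset_horizEdges_E1 {α : Type*} [AddCommMonoid α] (f : Finset (BBEdge ℕ) → α) :
    ∑ K ∈ (horizEdges E1).powerset, f K =
      ∑ L ∈ (horizEdges leftHalf).powerset, ∑ L' ∈ (horizEdges leftHalf).powerset,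
        ∑ B ∈ (horizEdges {(3, 7)}).powerset, f (glue L L' B) := by
  have hdisj : Disjoint (horizEdges leftHalf)
      (reverse (horizEdges leftHalf) ∪ horizEdges {(3, 7)}) := by decide
  have hdisj' : Disjoint (reverse (horizEdges leftHalf)) (horizEdges {(3, 7)}) := by decide
  have hinj : Set.InjOn reverse (horizEdges leftHalf).powerset := by
    refine Set.LeftInvOn.injOn (f₁' := reverse) fun L hL => reverse_reverse ?_
    exact (Finset.mem_powerset.1 hL).trans (horizEdges_E1 ▸ Finset.subset_union_left)
  have hpowerset : (reverse (horizEdges leftHalf)).powerset =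
      (horizEdges leftHalf).powerset.image reverse := Finset.powerset_image ..
  simp only [horizEdges_E1, sum_powerset_union hdisj, sum_powerset_union hdisj', hpowerset,
    Finset.sum_image hinj, glue]

section Glue

variable {L L' B : Finset (BBEdge ℕ)} (hL : L ⊆ horizEdges leftHalf)
  (hL' : L' ⊆ horizEdges leftHalf) (hB : B ⊆ horizEdges {(3, 7)})

include hL hL' hB

theorem glue_subset : glue L L' B ⊆ horizEdges E1 := by
  rw [horizEdges_E1]
  exact Finset.union_subset_union hL
    (Finset.union_subset_union (Finset.image_subset_image hL') hB)

theorem glue_inter_leftHalf : glue L L' B ∩ horizEdges leftHalf = L := by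
  have hdisj : Disjoint (reverse (horizEdges leftHalf) ∪ horizEdges {(3, 7)})
      (horizEdges leftHalf) := by decide
  have hempty : (reverse L' ∪ B) ∩ horizEdges leftHalf = ∅ :=
    (hdisj.mono_left (Finset.union_subset_union (Finset.image_subset_image hL') hB)).eq_bot
  rw [glue, Finset.union_inter_distrib_right, hempty, Finset.union_empty,
    Finset.inter_eq_left.2 hL]

theorem reverse_glue_inter_leftHalf : reverse (glue L L' B) ∩ horizEdges leftHalf = L' := by
  have hbridge : reverse (horizEdges {(3, 7)}) = horizEdges {(3, 7)} := by decide
  have hB' : reverse B ⊆ horizEdges {(3, 7)} := hbridge ▸ Finset.image_subset_image hB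
  have hglue : reverse (glue L L' B) = glue L' L (reverse B) := by
    have hrev : reverse (reverse L') = L' :=
      reverse_reverse (hL'.trans (horizEdges_E1 ▸ Finset.subset_union_left))
    simp only [glue]
    rw [reverse, Finset.image_union, Finset.image_union]
    change reverse L ∪ (reverse (reverse L') ∪ reverse B) = _
    rw [hrev, Finset.union_left_comm]
  rw [hglue, glue_inter_leftHalf hL' hL hB']

theorem bbReach_glue_nine_iff (β : Bool) :
    bbReach (vertEdges T1 ∪ glue L L' B) (1, false) (9, β) ↔
      (HalfReachesFive L false ∧ HalfReachesFive L' β) ∨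
        ∃ ε, (HalfReachesThree L false ε ∧ HalfReachesThree L' β ε) ∧ .horiz 3 7 ε ∈ B := by
  have hdisj : Disjoint (horizEdges leftHalf ∪ reverse (horizEdges leftHalf))
      (horizEdges {(3, 7)}) := by decide
  have hbridge (ε : Bool) : .horiz 3 7 ε ∈ glue L L' B ↔ .horiz 3 7 ε ∈ B := by
    have hnot : .horiz 3 7 ε ∉ L ∪ reverse L' := fun h =>
      Finset.disjoint_left.1 hdisj
        (Finset.union_subset_union hL (Finset.image_subset_image hL') h) (by simp)
    rw [glue, ← Finset.union_assoc, Finset.mem_union, or_iff_right hnot]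
  rw [bbReach_nine_iff (glue_subset hL hL' hB), ← halfReachesFive_inter,
    ← halfReachesFive_inter (K := reverse _)]
  simp only [← halfReachesThree_inter (K := glue L L' B),
    ← halfReachesThree_inter (K := reverse _), glue_inter_leftHalf hL hL' hB,
    reverse_glue_inter_leftHalf hL hL' hB, hbridge, and_assoc, and_comm (a := _ ∈ B)]

end Glue

/-! ### The sum over subgraphs with posts exactly at `2, 5, 8` -/

/-- The difference `x⁻ - x⁺`, where `x^ε` indicates that the vertex `1⁻` of a half reaches `3^ε`. -/
def threeSurplus (L : Finset (BBEdge ℕ)) : ℤ :=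
  iverson (HalfReachesThree L false false) - iverson (HalfReachesThree L false true)

theorem sum_threeSurplus : ∑ L ∈ (horizEdges leftHalf).powerset, threeSurplus L = 0 := by
  refine sum_eq_zero_of_M_eq_neg (F := {(2, 3)}) fun L _ => ?_
  have hmirror (ε : Bool) : HalfReachesThree (M L {(2, 3)}) false ε ↔
      HalfReachesThree L false (!ε) := by
    simp [HalfReachesThree, horiz_mem_M]
  simp only [threeSurplus, iverson_congr (hmirror _), Bool.not_false, Bool.not_true, neg_sub]

/-- The correlation, over the subgraphs of a half, between `1⁻` reaching `5` and the bunk in which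
it reaches `3`. -/
def halfBias : ℤ :=
  ∑ L ∈ (horizEdges leftHalf).powerset, iverson (HalfReachesFive L false) * threeSurplus L

/-- The correlation is negative because a path through `3` helps less when it arrives in the bunk of
`1`: there the edges `(1, 4)` and `(3, 4)` lead to the same copy of `4`. -/
theorem halfBias_eq : halfBias = -8 := by
  decide +kernel

theorem sum_mul_eq_neg_sq {ι R : Type*} [CommRing R] (s : Finset ι) (y σ : ι → R)
    (hσ : ∑ i ∈ s, σ i = 0) :
    ∑ i ∈ s, ∑ j ∈ s, (1 - y i * y j) * (σ i * σ j) = -(∑ i ∈ s, y i * σ i) ^ 2 := by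
  calc ∑ i ∈ s, ∑ j ∈ s, (1 - y i * y j) * (σ i * σ j)
    _ = ∑ i ∈ s, ∑ j ∈ s, (σ i * σ j - (y i * σ i) * (y j * σ j)) :=
      Finset.sum_congr rfl fun i _ => Finset.sum_congr rfl fun j _ => by ring
    _ = (∑ i ∈ s, σ i) ^ 2 - (∑ i ∈ s, y i * σ i) ^ 2 := by
      simp only [Finset.sum_sub_distrib, sq, Finset.sum_mul_sum]
    _ = -(∑ i ∈ s, y i * σ i) ^ 2 := by rw [hσ]; ring

/-- The number of sets of copies of the edge `(3, 7)` for which `1⁻` reaches `9^β` in the subgraph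
glued from the halves `L` and `L'`. -/
def bridgeCount (L L' : Finset (BBEdge ℕ)) (β : Bool) : ℤ :=
  4 - (1 - iverson (HalfReachesFive L false) * iverson (HalfReachesFive L' β)) *
    ((2 - iverson (HalfReachesThree L false false) * iverson (HalfReachesThree L' β false)) *
      (2 - iverson (HalfReachesThree L false true) * iverson (HalfReachesThree L' β true)))

theorem bridgeCount_sub_bridgeCount_M (L L' : Finset (BBEdge ℕ)) :
    bridgeCount L L' false - bridgeCount L (M L' leftHalf) true =
      2 * ((1 - iverson (HalfReachesFive L false) * iverson (HalfReachesFive L' false)) *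
        (threeSurplus L * threeSurplus L')) := by
  simp only [bridgeCount, threeSurplus, iverson_congr halfReachesFive_M_leftHalf,
    iverson_congr halfReachesThree_M_leftHalf, Bool.not_true, Bool.not_false]
  ring

open Classical in
theorem sum_iverson_bbReach_glue_nine {L L' : Finset (BBEdge ℕ)} (hL : L ⊆ horizEdges leftHalf)
    (hL' : L' ⊆ horizEdges leftHalf) (β : Bool) :
    ∑ B ∈ (horizEdges {(3, 7)}).powerset,
      iverson (bbReach (vertEdges T1 ∪ glue L L' B) (1, false) (9, β)) = bridgeCount L L' β := by
  calc ∑ B ∈ (horizEdges {(3, 7)}).powerset,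
      iverson (bbReach (vertEdges T1 ∪ glue L L' B) (1, false) (9, β))
    _ = ∑ B ∈ (horizEdges {(3, 7)}).powerset,
        iverson ((HalfReachesFive L false ∧ HalfReachesFive L' β) ∨
          ∃ ε, (HalfReachesThree L false ε ∧ HalfReachesThree L' β ε) ∧ .horiz 3 7 ε ∈ B) :=
      Finset.sum_congr rfl fun B hB =>
        iverson_congr (bbReach_glue_nine_iff hL hL' (Finset.mem_powerset.1 hB) β)
    _ = bridgeCount L L' β := by
      rw [sum_iverson_or_exists_horiz_mem]
      simp only [iverson_and, bridgeCount]

theorem sum_bunkSurplus_exactPosts :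
    ∑ K ∈ (horizEdges E1).powerset, bunkSurplus (vertEdges T1 ∪ K) 1 9 = -2 * halfBias ^ 2 := by
  set s := (horizEdges leftHalf).powerset
  have hmirror (L : Finset (BBEdge ℕ)) :
      ∑ L' ∈ s, bridgeCount L (M L' leftHalf) true = ∑ L' ∈ s, bridgeCount L L' true :=
    sum_powerset_horizEdges_comp_M leftHalf leftHalf (bridgeCount L · true)
  calc ∑ K ∈ (horizEdges E1).powerset, bunkSurplus (vertEdges T1 ∪ K) 1 9
    _ = ∑ L ∈ s, ∑ L' ∈ s, (bridgeCount L L' false - bridgeCount L L' true) := by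
      rw [sum_powerset_horizEdges_E1]
      refine Finset.sum_congr rfl fun L hL => Finset.sum_congr rfl fun L' hL' => ?_
      simp only [bunkSurplus, Finset.sum_sub_distrib]
      rw [sum_iverson_bbReach_glue_nine, sum_iverson_bbReach_glue_nine] <;> grind
    _ = ∑ L ∈ s, ∑ L' ∈ s, (bridgeCount L L' false - bridgeCount L (M L' leftHalf) true) := by
      simp only [Finset.sum_sub_distrib, hmirror]
    _ = 2 * ∑ L ∈ s, ∑ L' ∈ s,
        (1 - iverson (HalfReachesFive L false) * iverson (HalfReachesFive L' false)) *
          (threeSurplus L * threeSurplus L') := by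
      simp only [bridgeCount_sub_bridgeCount_M, Finset.mul_sum]
    _ = -2 * halfBias ^ 2 := by
      rw [sum_mul_eq_neg_sq s _ _ sum_threeSurplus, halfBias]
      ring

/-! ### Additional posts -/

/-- The path `1, 4, 3, 7, 6, 9` is the only one from `1` to `9` that avoids `T1`, and a further post
`w` lies on it; `S` is the part of the path after `w`. -/
theorem exists_hasPostBoundary_insert {w : ℕ} (hw : w ∈ V1) (hwT : w ∉ T1) :
    ∃ S, HasPostBoundary E1 (insert w T1) S ∧ 1 ∉ S ∧ 9 ∈ S ∪ insert w T1 := by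
  have hpath : w = 1 ∨ w = 4 ∨ w = 3 ∨ w = 7 ∨ w = 6 ∨ w = 9 := by
    revert w
    decide
  unfold HasPostBoundary
  rcases hpath with rfl | rfl | rfl | rfl | rfl | rfl
  · exact ⟨{4, 3, 7, 6, 9}, by decide⟩
  · exact ⟨{3, 7, 6, 9}, by decide⟩
  · exact ⟨{7, 6, 9}, by decide⟩
  · exact ⟨{6, 9}, by decide⟩
  · exact ⟨{9}, by decide⟩
  · exact ⟨∅, by decide⟩

theorem sum_bunkSurplus_eq_zero_of_T1_ssubset {P : Finset ℕ} (hP : P ⊆ V1) (hT : T1 ⊂ P) :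
    ∑ K ∈ (horizEdges E1).powerset, bunkSurplus (vertEdges P ∪ K) 1 9 = 0 := by
  obtain ⟨w, hwP, hwT⟩ := Finset.exists_of_ssubset hT
  obtain ⟨S, hS, h_one, h_nine⟩ := exists_hasPostBoundary_insert (hP hwP) hwT
  have hsub : insert w T1 ⊆ P := Finset.insert_subset hwP hT.subset
  exact sum_bunkSurplus_eq_zero_of_hasPostBoundary (hS.mono hsub) h_one
    (Finset.union_subset_union_right hsub h_nine)

theorem sum_bunkSurplus_postCond [DecidablePred (postCond T1)] :
    ∑ H ∈ s1.powerset with postCond T1 H, bunkSurplus H 1 9 =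
      ∑ K ∈ (horizEdges E1).powerset, bunkSurplus (vertEdges T1 ∪ K) 1 9 := by
  have hpost (P : Finset ℕ) :
      ∑ K ∈ (horizEdges E1).powerset,
          (if postCond T1 (vertEdges P ∪ K) then bunkSurplus (vertEdges P ∪ K) 1 9 else 0) =
        ∑ K ∈ (horizEdges E1).powerset,
          if T1 ⊆ P then bunkSurplus (vertEdges P ∪ K) 1 9 else 0 :=
    Finset.sum_congr rfl fun K hK => by
      simp only [postCond_vertEdges_union (Finset.mem_powerset.1 hK)]
  rw [Finset.sum_filter, s1, sum_powerset_bbEdges]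
  simp only [hpost]
  rw [Finset.sum_eq_single T1]
  · simp only [subset_refl, if_true]
  · intro P hP hPT
    by_cases hT : T1 ⊆ P
    · simp only [hT, if_true]
      exact sum_bunkSurplus_eq_zero_of_T1_ssubset (Finset.mem_powerset.1 hP)
        (hT.ssubset_of_ne hPT.symm)
    · simp only [hT, if_false, Finset.sum_const_zero]
  · exact fun h => absurd (Finset.mem_powerset.2 (by decide)) h

/-- Proposition 1 of the paper: the Bunkbed Conjecture fails for the
conditioned model: for `G₁` with `T = {2,5,8}` and `p = 1/2`, the conditioned bunkbed
percolation `𝓔_T` satisfies `ℙ(1⁻ → 9⁻) < ℙ(1⁻ → 9⁺)`. -/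
theorem conditioned_bunkbed_counterexample :
    CondPr s1 (postCond T1) (fun H => bbReach H (1, false) (9, false)) <
      CondPr s1 (postCond T1) (fun H => bbReach H (1, false) (9, true)) := by
  classical
  refine condPr_lt_condPr_of_sum_neg ?_
  calc ∑ H ∈ s1.powerset with postCond T1 H,
      (iverson (bbReach H (1, false) (9, false)) - iverson (bbReach H (1, false) (9, true)))
    _ = ∑ H ∈ s1.powerset with postCond T1 H, bunkSurplus H 1 9 := rfl
    _ = ∑ K ∈ (horizEdges E1).powerset, bunkSurplus (vertEdges T1 ∪ K) 1 9 :=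
      sum_bunkSurplus_postCond
    _ = -2 * halfBias ^ 2 := sum_bunkSurplus_exactPosts
    _ < 0 := by rw [halfBias_eq]; norm_num
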